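/- Assume additionally that K is algebraically closed. Then u and u' are not conjugate in Sp(V, β); that is, there is no invertible matrix g with β(gv, gw) = β(v, w) for all v, w ∈ V and g u g⁻¹ = u'. -/

import Mathlib

open Matrix

/-- `E i j`: the 10×10 matrix with a single `1` in position `(i, j)`. -/
def Emat (K : Type*) [Field K] (i j : Fin 10) : Matrix (Fin 10) (Fin 10) K :=
  Matrix.single i j 1

/-- The antidiagonal Gram matrix `J` of the alternating form `β(v, w) = vᵀ J w`. -/
def Jmat (K : Type*) [Field K] : Matrix (Fin 10) (Fin 10) K :=
  Matrix.of fun i j => if (i : ℕ) + (j : ℕ) = 9 then 1 else 0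

/-- The generator `A = I + E₁,₅ + E₁,₁₀ + E₆,₁₀` (1-indexed). -/
def Amat (K : Type*) [Field K] : Matrix (Fin 10) (Fin 10) K :=
  1 + Emat K 0 4 + Emat K 0 9 + Emat K 5 9

/-- The generator `B = E₂,₁ + E₃,₂ + E₄,₃ + E₅,₄ + E₁₀,₅ + E₉,₁₀ + E₈,₉ + E₇,₈ + E₆,₇ + E₁,₆`
(1-indexed). -/
def Bmat (K : Type*) [Field K] : Matrix (Fin 10) (Fin 10) K :=
  Emat K 1 0 + Emat K 2 1 + Emat K 3 2 + Emat K 4 3 + Emat K 9 4 +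
    Emat K 8 9 + Emat K 7 8 + Emat K 6 7 + Emat K 5 6 + Emat K 0 5

/-- `u = B⁴AB⁶AB⁵A`. -/
def uMat (K : Type*) [Field K] : Matrix (Fin 10) (Fin 10) K :=
  Bmat K ^ 4 * Amat K * Bmat K ^ 6 * Amat K * Bmat K ^ 5 * Amat K

/-- `u' = BAB²AB⁴AB³A`. -/
def u'Mat (K : Type*) [Field K] : Matrix (Fin 10) (Fin 10) K :=
  Bmat K * Amat K * Bmat K ^ 2 * Amat K * Bmat K ^ 4 * Amat K * Bmat K ^ 3 * Amat K

/-!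
In characteristic 2 both `u` and `u'` are unipotent with Jordan blocks of sizes 6, 2, 2, so they are
conjugate in `GL(V)`. What separates them is Hesselink's invariant `ε(2)`, which records whether
`β(x, u x)` vanishes for every `x` with `u² x = x`, and which conjugation by an isometry of `β`
preserves. It does not vanish for `u`, which swaps `e₂` and `e₉` while `β(e₂, e₉) = 1`; it does
vanish for `u'`, whose square fixes exactly the `x` with `x₂ = x₃ = x₇ = 0` and `x₉ = x₁₀`.
Coordinates are numbered from 1 in this paragraph and from 0 in the lemmas.
-/

section SqFixed

variable {n R : Type*} [Fintype n] [NonUnitalSemiring R]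

/-- The form with Gram matrix `M` satisfies `β(x, u x) = 0` for every `x` fixed by `u²`. In
characteristic 2, for `u` unipotent and `β` alternating, `β(x, u x) = β(x, (u - 1) x)` and
`u² - 1 = (u - 1)²`, so this says that Hesselink's invariant `ε(2)` of `u` is zero. -/
def IsotropicOnSqFixed (M u : Matrix n n R) : Prop :=
  ∀ x : n → R, u *ᵥ (u *ᵥ x) = x → x ⬝ᵥ M *ᵥ (u *ᵥ x) = 0

lemma IsotropicOnSqFixed.of_semiconjBy {M u u' g : Matrix n n R}
    (hu' : IsotropicOnSqFixed M u')
    (hg : ∀ v w : n → R, (g *ᵥ v) ⬝ᵥ M *ᵥ (g *ᵥ w) = v ⬝ᵥ M *ᵥ w)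
    (hconj : SemiconjBy g u u') : IsotropicOnSqFixed M u := by
  intro x hx
  have hswap (y : n → R) : u' *ᵥ (g *ᵥ y) = g *ᵥ (u *ᵥ y) := by
    rw [mulVec_mulVec, mulVec_mulVec, hconj.eq]
  have hfixed : u' *ᵥ (u' *ᵥ (g *ᵥ x)) = g *ᵥ x := by rw [hswap, hswap, hx]
  calc x ⬝ᵥ M *ᵥ (u *ᵥ x) = (g *ᵥ x) ⬝ᵥ M *ᵥ (u' *ᵥ (g *ᵥ x)) := by rw [hswap, hg]
    _ = 0 := hu' _ hfixed

end SqFixed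

section Coordinates

variable {K : Type*} [Field K]

lemma Amat_mulVec (x : Fin 10 → K) :
    Amat K *ᵥ x =
      ![x 0 + x 4 + x 9, x 1, x 2, x 3, x 4, x 5 + x 9, x 6, x 7, x 8, x 9] := by
  ext k
  fin_cases k <;> simp [Amat, Emat, add_mulVec, single_mulVec]

lemma Bmat_mulVec (x : Fin 10 → K) :
    Bmat K *ᵥ x = ![x 5, x 0, x 1, x 2, x 3, x 6, x 7, x 8, x 9, x 4] := by
  ext k
  fin_cases k <;> simp [Bmat, Emat, add_mulVec, single_mulVec]

lemma dotProduct_Jmat_mulVec (x y : Fin 10 → K) :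
    x ⬝ᵥ Jmat K *ᵥ y =
      x 0 * y 9 + x 1 * y 8 + x 2 * y 7 + x 3 * y 6 + x 4 * y 5 +
        x 5 * y 4 + x 6 * y 3 + x 7 * y 2 + x 8 * y 1 + x 9 * y 0 := by
  simp [Jmat, mulVec, dotProduct, Fin.sum_univ_succ, add_assoc]

lemma uMat_mulVec (x : Fin 10 → K) :
    uMat K *ᵥ x =
      ![x 0 + x 4 + x 5 + 3 * x 9, x 8, x 7, x 0 + 2 * x 4 + x 6 + x 9,
        x 0 + x 3 + 2 * x 4 + x 5 + 2 * x 9, x 0 + 2 * x 4 + x 9, x 3, x 2, x 1,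
        x 0 + x 4 + x 9] := by
  ext k
  fin_cases k <;>
    simp [uMat, pow_succ, ← mulVec_mulVec, Amat_mulVec, Bmat_mulVec] <;> ring

lemma uMat_mulVec_single_one : uMat K *ᵥ Pi.single 1 1 = Pi.single 8 1 := by
  rw [uMat_mulVec]
  ext k
  fin_cases k <;> simp

lemma uMat_mulVec_single_eight : uMat K *ᵥ Pi.single 8 1 = Pi.single 1 1 := by
  rw [uMat_mulVec]
  ext k
  fin_cases k <;> simp

lemma u'Mat_mulVec (x : Fin 10 → K) :
    u'Mat K *ᵥ x =
      ![x 0 + x 2 + x 4 + x 8 + x 9, x 1 + x 2 + x 8 + x 9, x 2 + x 6,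
        x 1 + x 2 + x 3 + x 6 + x 7, x 4, x 5 + x 9, x 6, x 1 + x 2 + x 7, x 2 + x 8, x 9] := by
  ext k
  fin_cases k <;>
    simp [u'Mat, pow_succ, ← mulVec_mulVec, Amat_mulVec, Bmat_mulVec] <;> ring

lemma u'Mat_mulVec_mulVec [CharP K 2] (x : Fin 10 → K) :
    u'Mat K *ᵥ (u'Mat K *ᵥ x) =
      x + ![x 2 + x 6, x 2 + x 6, 0, x 1 + x 6 + x 8 + x 9, 0, 0, 0,
        x 2 + x 6 + x 8 + x 9, x 6, 0] := by
  ext k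
  fin_cases k <;> simp [u'Mat_mulVec] <;> grind

lemma u'Mat_mulVec_mulVec_eq_self_iff [CharP K 2] (x : Fin 10 → K) :
    u'Mat K *ᵥ (u'Mat K *ᵥ x) = x ↔ x 1 = 0 ∧ x 2 = 0 ∧ x 6 = 0 ∧ x 8 = x 9 := by
  rw [u'Mat_mulVec_mulVec, add_eq_left]
  simp only [cons_eq_zero_iff, eq_iff_true_of_subsingleton]
  grind

end Coordinates

section Isotropy

variable (K : Type*) [Field K]

lemma not_isotropicOnSqFixed_uMat : ¬ IsotropicOnSqFixed (Jmat K) (uMat K) := by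
  intro h
  have hzero := h (Pi.single 1 1) (by rw [uMat_mulVec_single_one, uMat_mulVec_single_eight])
  rw [uMat_mulVec_single_one, dotProduct_Jmat_mulVec] at hzero
  simp at hzero

lemma isotropicOnSqFixed_u'Mat [CharP K 2] : IsotropicOnSqFixed (Jmat K) (u'Mat K) := by
  intro x hx
  obtain ⟨h1, h2, h6, h89⟩ := (u'Mat_mulVec_mulVec_eq_self_iff x).1 hx
  calc x ⬝ᵥ Jmat K *ᵥ (u'Mat K *ᵥ x)
      = 2 * (x 0 * x 9 + x 4 * x 5 + x 4 * x 9 + 2 * x 9 ^ 2) := by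
        rw [dotProduct_Jmat_mulVec, u'Mat_mulVec]
        simp only [cons_val, h1, h2, h6, h89]
        ring
    _ = 0 := by rw [CharTwo.two_eq_zero, zero_mul]

end Isotropy

theorem statement11_general (K : Type*) [Field K] [CharP K 2] :
    ¬ ∃ g : (Matrix (Fin 10) (Fin 10) K)ˣ,
      (∀ v w : Fin 10 → K,
        dotProduct ((g : Matrix (Fin 10) (Fin 10) K).mulVec v)
            ((Jmat K).mulVec ((g : Matrix (Fin 10) (Fin 10) K).mulVec w)) =
          dotProduct v ((Jmat K).mulVec w)) ∧
      (g : Matrix (Fin 10) (Fin 10) K) * uMat K * ((g⁻¹ : (Matrix (Fin 10) (Fin 10) K)ˣ) :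
        Matrix (Fin 10) (Fin 10) K) = u'Mat K := by
  rintro ⟨g, hg, hu⟩
  have hconj : SemiconjBy (g : Matrix (Fin 10) (Fin 10) K) (uMat K) (u'Mat K) :=
    (Units.mul_inv_eq_iff_eq_mul g).1 hu
  exact not_isotropicOnSqFixed_uMat K ((isotropicOnSqFixed_u'Mat K).of_semiconjBy hg hconj)

/-- over an algebraically closed `K` of characteristic `2`, the elements `u`
and `u'` are not conjugate in `Sp(V, β)`: there is no invertible matrix `g` preserving `β`
with `g u g⁻¹ = u'`. -/
theorem statement11 (K : Type*) [Field K] [CharP K 2] [IsAlgClosed K] :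
    ¬ ∃ g : (Matrix (Fin 10) (Fin 10) K)ˣ,
      (∀ v w : Fin 10 → K,
        dotProduct ((g : Matrix (Fin 10) (Fin 10) K).mulVec v)
            ((Jmat K).mulVec ((g : Matrix (Fin 10) (Fin 10) K).mulVec w)) =
          dotProduct v ((Jmat K).mulVec w)) ∧
      (g : Matrix (Fin 10) (Fin 10) K) * uMat K * ((g⁻¹ : (Matrix (Fin 10) (Fin 10) K)ˣ) :
        Matrix (Fin 10) (Fin 10) K) = u'Mat K :=
  statement11_general K
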